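/- Let n ≥ 3, let 0 ≤ ψ < φ ≤ π/2 and 0 < θ < 2φ. Then A(n−1, ω(θ,φ)) ≤ A(n,θ,[ψ,φ]) ≤ A(n,θ,φ) ≤ A(n, ω(θ,φ)), where A(n−1,·) refers to codes on the unit sphere S^{n−2} ⊂ ℝ^{n−1}. -/

import Mathlib

noncomputable section

/-- The "North pole" `(0, …, 0, 1)` of the unit sphere in `ℝ^n`. -/
def north (n : ℕ) : EuclideanSpace ℝ (Fin n) :=
  if h : 0 < n then EuclideanSpace.single ⟨n - 1, Nat.sub_lt h Nat.one_pos⟩ 1 else 0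

/-- Angular distance between two points: `arccos ⟨x, y⟩`. -/
def aDist {n : ℕ} (x y : EuclideanSpace ℝ (Fin n)) : ℝ := Real.arccos (inner ℝ x y : ℝ)

/-- A finite set of unit vectors with pairwise angular distance at least `θ`. -/
def IsCode {n : ℕ} (θ : ℝ) (C : Finset (EuclideanSpace ℝ (Fin n))) : Prop :=
  (∀ x ∈ C, ‖x‖ = 1) ∧ ∀ x ∈ C, ∀ y ∈ C, x ≠ y → θ ≤ aDist x y

/-- `A(n, θ)`: maximal size of a `θ`-code on the unit sphere `S^{n-1} ⊂ ℝ^n`. -/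
def sphereMax (n : ℕ) (θ : ℝ) : ℕ :=
  sSup {M | ∃ C : Finset (EuclideanSpace ℝ (Fin n)), IsCode θ C ∧ C.card = M}

/-- `A(n, θ, φ)`: maximal size of a `θ`-code in the cap of angular radius `φ` about the
North pole. -/
def capMax (n : ℕ) (θ φ : ℝ) : ℕ :=
  sSup {M | ∃ C : Finset (EuclideanSpace ℝ (Fin n)), IsCode θ C ∧
    (∀ x ∈ C, aDist x (north n) ≤ φ) ∧ C.card = M}

/-- `A(n, θ, [ψ, φ])`: maximal size of a `θ`-code in the strip `Z(n, [ψ, φ])`. -/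
def stripMax (n : ℕ) (θ ψ φ : ℝ) : ℕ :=
  sSup {M | ∃ C : Finset (EuclideanSpace ℝ (Fin n)), IsCode θ C ∧
    (∀ x ∈ C, ψ ≤ aDist x (north n) ∧ aDist x (north n) ≤ φ) ∧ C.card = M}

/-- `m(n, d)`: maximal number of points in the closed unit ball of `ℝ^n` with pairwise
Euclidean distances at least `d`. -/
def ballMax (n : ℕ) (d : ℝ) : ℕ :=
  sSup {M | ∃ C : Finset (EuclideanSpace ℝ (Fin n)), (∀ x ∈ C, ‖x‖ ≤ 1) ∧
    (∀ x ∈ C, ∀ y ∈ C, x ≠ y → d ≤ dist x y) ∧ C.card = M}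

/-- `ω(θ, α, β) = arccos((cos θ - cos α cos β) / (sin α sin β))`. -/
def omega2 (θ α β : ℝ) : ℝ :=
  Real.arccos ((Real.cos θ - Real.cos α * Real.cos β) / (Real.sin α * Real.sin β))

/-- `ω(θ, α) := ω(θ, α, α)`. -/
def omega1 (θ α : ℝ) : ℝ := omega2 θ α α

end

/-!
By the spherical law of cosines, two points on the parallel at angular distance `φ` from the pole
are at angular distance `θ` exactly when their longitudes, seen as points of the equator, differ by
`ω(θ, φ)`. Hence placing an `ω(θ, φ)`-code of the equator on that parallel gives a `θ`-code, which
lies in every strip `[ψ, φ]`. Conversely, project the cap of radius `φ` orthogonally along the axis,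
scale the resulting disc to radius `1` and lift it back to the hemisphere. The parallel at `φ` lands
on the equator, and the inequality `√(a² - c²) √(b² - c²) ≤ a b - c²` shows that two points of the
cap at distance at least `θ` end up at distance at least `ω(θ, φ)`.
-/

section

open Real Metric Module
open scoped InnerProductSpace NNReal

lemma packingNumber_ne_top_of_totallyBounded {X : Type*} [PseudoEMetricSpace X] {A : Set X}
    (hA : TotallyBounded A) {ε : ℝ≥0} (hε : ε ≠ 0) : packingNumber ε A ≠ ⊤ := by
  obtain ⟨N, -, hN, hcover⟩ :=
    exists_finite_isCover_of_totallyBounded (div_ne_zero hε two_ne_zero) hA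
  have hle : packingNumber ε A ≤ N.encard :=
    calc packingNumber ε A = packingNumber (2 * (ε / 2)) A := by rw [mul_div_cancel₀ _ two_ne_zero]
      _ ≤ externalCoveringNumber (ε / 2) A := packingNumber_two_mul_le_externalCoveringNumber _ _
      _ ≤ N.encard := hcover.externalCoveringNumber_le_encard
  exact (hle.trans_lt hN.encard_lt_top).ne

lemma sqrt_mul_sqrt_sq_sub_sq_le {a b c : ℝ} (hc : 0 ≤ c) (ha : c ≤ a) (hb : c ≤ b) :
    √(a ^ 2 - c ^ 2) * √(b ^ 2 - c ^ 2) ≤ a * b - c ^ 2 := by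
  have hab : 0 ≤ a * b - c ^ 2 := by nlinarith
  rw [← sqrt_mul (by nlinarith)]
  refine sqrt_le_iff.2 ⟨hab, ?_⟩
  calc (a ^ 2 - c ^ 2) * (b ^ 2 - c ^ 2)
      = (a * b - c ^ 2) ^ 2 - c ^ 2 * (a - b) ^ 2 := by ring
    _ ≤ (a * b - c ^ 2) ^ 2 := sub_le_self _ (by positivity)

lemma exists_linearIsometry_inner_eq_zero {E : Type*} [NormedAddCommGroup E]
    [InnerProductSpace ℝ E] {m : ℕ} (hE : finrank ℝ E = m + 1) {e : E} (he : e ≠ 0) :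
    ∃ ι : EuclideanSpace ℝ (Fin m) →ₗᵢ[ℝ] E, ∀ x, ⟪ι x, e⟫_ℝ = 0 := by
  have : Fact (finrank ℝ E = m + 1) := ⟨hE⟩
  let b := OrthonormalBasis.fromOrthogonalSpanSingleton (𝕜 := ℝ) m he
  refine ⟨(ℝ ∙ e)ᗮ.subtypeₗᵢ.comp b.repr.symm.toLinearIsometry, fun x ↦ ?_⟩
  exact Submodule.mem_orthogonal_singleton_iff_inner_left.1 (b.repr.symm x).2

section Maps

variable {E F : Type*} [NormedAddCommGroup E] [InnerProductSpace ℝ E]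
  [NormedAddCommGroup F] [InnerProductSpace ℝ F]

/-- The map placing the unit sphere of the equatorial space `F`, embedded in `E` by `ι`, on the
parallel of the unit sphere of `E` at angular distance `φ` from the pole `e`. -/
noncomputable def toParallel (ι : F →ₗᵢ[ℝ] E) (e : E) (φ : ℝ) (x : F) : E :=
  sin φ • ι x + cos φ • e

lemma inner_toParallel {ι : F →ₗᵢ[ℝ] E} {e : E} (he : ‖e‖ = 1) (hι : ∀ x, ⟪ι x, e⟫_ℝ = 0)
    (φ : ℝ) (x y : F) :
    ⟪toParallel ι e φ x, toParallel ι e φ y⟫_ℝ = sin φ ^ 2 * ⟪x, y⟫_ℝ + cos φ ^ 2 := by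
  have hι' : ∀ x, ⟪e, ι x⟫_ℝ = 0 := fun x ↦ by rw [real_inner_comm, hι]
  have hee : ⟪e, e⟫_ℝ = 1 := by rw [real_inner_self_eq_norm_sq, he, one_pow]
  simp only [toParallel, inner_add_left, inner_add_right, real_inner_smul_left,
    real_inner_smul_right, hι, hι', ι.inner_map_map, hee]
  ring

lemma norm_toParallel {ι : F →ₗᵢ[ℝ] E} {e : E} (he : ‖e‖ = 1) (hι : ∀ x, ⟪ι x, e⟫_ℝ = 0)
    (φ : ℝ) {x : F} (hx : ‖x‖ = 1) : ‖toParallel ι e φ x‖ = 1 := by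
  rw [norm_eq_sqrt_real_inner, inner_toParallel he hι, real_inner_self_eq_norm_sq, hx, one_pow,
    mul_one, sin_sq_add_cos_sq, sqrt_one]

lemma inner_toParallel_pole {ι : F →ₗᵢ[ℝ] E} {e : E} (he : ‖e‖ = 1)
    (hι : ∀ x, ⟪ι x, e⟫_ℝ = 0) (φ : ℝ) (x : F) : ⟪toParallel ι e φ x, e⟫_ℝ = cos φ := by
  simp only [toParallel, inner_add_left, real_inner_smul_left, hι, real_inner_self_eq_norm_sq, he]
  ring

/-- The map spreading the cap of angular radius `φ` about the pole `e` over the hemisphere: the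
component of `x` orthogonal to `e` is scaled by `1 / sin φ`, and the component along `e` is chosen
so that unit vectors of the cap go to unit vectors. -/
noncomputable def capToHemisphere (e : E) (φ : ℝ) (x : E) : E :=
  (sin φ)⁻¹ • ((x - ⟪x, e⟫_ℝ • e) + √(⟪x, e⟫_ℝ ^ 2 - cos φ ^ 2) • e)

lemma sin_sq_mul_inner_capToHemisphere {e : E} (he : ‖e‖ = 1) {φ : ℝ} (hφ : sin φ ≠ 0)
    (x y : E) :
    sin φ ^ 2 * ⟪capToHemisphere e φ x, capToHemisphere e φ y⟫_ℝ =
      ⟪x, y⟫_ℝ - ⟪x, e⟫_ℝ * ⟪y, e⟫_ℝ +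
        √(⟪x, e⟫_ℝ ^ 2 - cos φ ^ 2) * √(⟪y, e⟫_ℝ ^ 2 - cos φ ^ 2) := by
  have hee : ⟪e, e⟫_ℝ = 1 := by rw [real_inner_self_eq_norm_sq, he, one_pow]
  simp only [capToHemisphere, inner_add_left, inner_add_right, inner_sub_left, inner_sub_right,
    real_inner_smul_left, real_inner_smul_right, hee, real_inner_comm y e]
  field_simp
  ring

lemma norm_capToHemisphere {e : E} (he : ‖e‖ = 1) {φ : ℝ} (hφ : sin φ ≠ 0)
    (hφ' : 0 ≤ cos φ) {x : E} (hx : ‖x‖ = 1) (hcap : cos φ ≤ ⟪x, e⟫_ℝ) :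
    ‖capToHemisphere e φ x‖ = 1 := by
  have hsq : cos φ ^ 2 ≤ ⟪x, e⟫_ℝ ^ 2 := by gcongr
  have h : sin φ ^ 2 * ⟪capToHemisphere e φ x, capToHemisphere e φ x⟫_ℝ = sin φ ^ 2 * 1 := by
    rw [sin_sq_mul_inner_capToHemisphere he hφ, mul_self_sqrt (sub_nonneg.2 hsq),
      real_inner_self_eq_norm_sq, hx, sin_sq]
    ring
  rw [norm_eq_sqrt_real_inner, mul_left_cancel₀ (pow_ne_zero 2 hφ) h, sqrt_one]

lemma sin_sq_mul_inner_capToHemisphere_le {e : E} (he : ‖e‖ = 1) {φ : ℝ} (hφ : sin φ ≠ 0)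
    (hφ' : 0 ≤ cos φ) {x y : E} (hx : cos φ ≤ ⟪x, e⟫_ℝ) (hy : cos φ ≤ ⟪y, e⟫_ℝ) :
    sin φ ^ 2 * ⟪capToHemisphere e φ x, capToHemisphere e φ y⟫_ℝ ≤ ⟪x, y⟫_ℝ - cos φ ^ 2 := by
  rw [sin_sq_mul_inner_capToHemisphere he hφ]
  linarith [sqrt_mul_sqrt_sq_sub_sq_le hφ' hx hy]

end Maps

lemma omega1_eq_arccos (θ φ : ℝ) :
    omega1 θ φ = arccos ((cos θ - cos φ ^ 2) / sin φ ^ 2) := by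
  rw [omega1, omega2, sq, sq]

lemma omega1_pos {θ φ : ℝ} (hθ : 0 < θ) (hθπ : θ ≤ π) (hφ : sin φ ≠ 0) : 0 < omega1 θ φ := by
  have hcos : cos θ < 1 := cos_zero ▸ cos_lt_cos_of_nonneg_of_le_pi le_rfl hθπ hθ
  rw [omega1_eq_arccos, arccos_pos, div_lt_one (by positivity), sin_sq]
  linarith

lemma sin_sq_mul_cos_omega1 {θ φ : ℝ} (hφ : sin φ ≠ 0) (h : cos (2 * φ) ≤ cos θ) :
    sin φ ^ 2 * cos (omega1 θ φ) = cos θ - cos φ ^ 2 := by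
  have hsin : 0 < sin φ ^ 2 := by positivity
  rw [omega1_eq_arccos, cos_arccos, mul_div_cancel₀ _ hsin.ne']
  · rw [le_div_iff₀ hsin]
    linarith [cos_two_mul' φ]
  · rw [div_le_one hsin, sin_sq]
    linarith [cos_le_one θ]

section Codes

variable {k n : ℕ} {θ φ : ℝ} {x y : EuclideanSpace ℝ (Fin n)}
  {C : Finset (EuclideanSpace ℝ (Fin n))}

lemma norm_north (hn : 0 < n) : ‖north n‖ = 1 := by
  simp [north, hn]

lemma aDist_self (hx : ‖x‖ = 1) : aDist x x = 0 := by
  rw [aDist, real_inner_self_eq_norm_sq, hx, one_pow, arccos_one]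

lemma cos_aDist (hx : ‖x‖ = 1) (hy : ‖y‖ = 1) : cos (aDist x y) = ⟪x, y⟫_ℝ :=
  cos_arccos (neg_one_le_real_inner_of_norm_eq_one hx hy) (real_inner_le_one_of_norm_eq_one hx hy)

lemma aDist_mem_Icc (x y : EuclideanSpace ℝ (Fin n)) : aDist x y ∈ Set.Icc 0 π :=
  ⟨arccos_nonneg _, arccos_le_pi _⟩

lemma le_aDist_iff (hx : ‖x‖ = 1) (hy : ‖y‖ = 1) (hθ : θ ∈ Set.Icc 0 π) :
    θ ≤ aDist x y ↔ ⟪x, y⟫_ℝ ≤ cos θ := by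
  rw [← cos_aDist hx hy, strictAntiOn_cos.le_iff_ge (aDist_mem_Icc x y) hθ]

lemma aDist_le_iff (hx : ‖x‖ = 1) (hy : ‖y‖ = 1) (hφ : φ ∈ Set.Icc 0 π) :
    aDist x y ≤ φ ↔ cos φ ≤ ⟪x, y⟫_ℝ := by
  rw [← cos_aDist hx hy, strictAntiOn_cos.le_iff_ge hφ (aDist_mem_Icc x y)]

namespace IsCode

lemma anti {θ' : ℝ} (hC : IsCode θ C) (h : θ' ≤ θ) : IsCode θ' C :=
  ⟨hC.1, fun x hx y hy hxy ↦ h.trans (hC.2 x hx y hy hxy)⟩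

-- The chord of an angle `θ` has length `√(2 - 2 cos θ)`; `IsSeparated` is strict, hence the
-- smaller constant.
lemma isSeparated (hC : IsCode θ C) (hθ : 0 < θ) (hθπ : θ ≤ π) :
    IsSeparated (√(1 - cos θ)).toNNReal (C : Set (EuclideanSpace ℝ (Fin n))) := by
  intro x hx y hy hxy
  have hcos : cos θ < 1 := cos_zero ▸ cos_lt_cos_of_nonneg_of_le_pi le_rfl hθπ hθ
  have hinner : ⟪x, y⟫_ℝ ≤ cos θ :=
    (le_aDist_iff (hC.1 x hx) (hC.1 y hy) ⟨hθ.le, hθπ⟩).1 (hC.2 x hx y hy hxy)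
  have hdist : √(1 - cos θ) < dist x y := by
    rw [dist_eq_norm, sqrt_lt' (norm_pos_iff.2 (sub_ne_zero.2 hxy)), norm_sub_sq_real, hC.1 x hx,
      hC.1 y hy]
    linarith
  rw [edist_dist]
  exact ENNReal.ofReal_lt_ofReal_iff_of_nonneg (sqrt_nonneg _) |>.2 hdist

lemma exists_card_le (n : ℕ) (hθ : 0 < θ) :
    ∃ N : ℕ, ∀ C : Finset (EuclideanSpace ℝ (Fin n)), IsCode θ C → C.card ≤ N := by
  set t := min θ π
  have ht : 0 < t := lt_min hθ pi_pos
  have htπ : t ≤ π := min_le_right θ π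
  have hcos : cos t < 1 := cos_zero ▸ cos_lt_cos_of_nonneg_of_le_pi le_rfl htπ ht
  set ε : ℝ≥0 := (√(1 - cos t)).toNNReal
  have hε : ε ≠ 0 := (toNNReal_pos.2 (sqrt_pos.2 (sub_pos.2 hcos))).ne'
  obtain ⟨N, hN⟩ := ENat.ne_top_iff_exists.1 <| packingNumber_ne_top_of_totallyBounded
    (isCompact_sphere (0 : EuclideanSpace ℝ (Fin n)) 1).totallyBounded hε
  refine ⟨N, fun C hC ↦ ?_⟩
  have hsphere : (C : Set (EuclideanSpace ℝ (Fin n))) ⊆ sphere 0 1 := fun x hx ↦ by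
    simpa using hC.1 x hx
  have hcard := ((hC.anti (min_le_left θ π)).isSeparated ht htπ).encard_le_packingNumber hsphere
  rw [← hN, Set.encard_coe_eq_coe_finsetCard] at hcard
  exact_mod_cast hcard

lemma card_le_sphereMax (hC : IsCode θ C) (hθ : 0 < θ) : C.card ≤ sphereMax n θ := by
  obtain ⟨N, hN⟩ := exists_card_le n hθ
  exact le_csSup ⟨N, by rintro _ ⟨D, hD, rfl⟩; exact hN D hD⟩ ⟨C, hC, rfl⟩

lemma card_le_capMax (hC : IsCode θ C) (hθ : 0 < θ) (hcap : ∀ x ∈ C, aDist x (north n) ≤ φ) :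
    C.card ≤ capMax n θ φ := by
  obtain ⟨N, hN⟩ := exists_card_le n hθ
  exact le_csSup ⟨N, by rintro _ ⟨D, hD, -, rfl⟩; exact hN D hD⟩ ⟨C, hC, hcap, rfl⟩

lemma card_le_stripMax {ψ : ℝ} (hC : IsCode θ C) (hθ : 0 < θ)
    (hstrip : ∀ x ∈ C, ψ ≤ aDist x (north n) ∧ aDist x (north n) ≤ φ) :
    C.card ≤ stripMax n θ ψ φ := by
  obtain ⟨N, hN⟩ := exists_card_le n hθ
  exact le_csSup ⟨N, by rintro _ ⟨D, hD, -, rfl⟩; exact hN D hD⟩ ⟨C, hC, hstrip, rfl⟩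

end IsCode

open scoped Classical in
lemma isCode_image {f : EuclideanSpace ℝ (Fin n) → EuclideanSpace ℝ (Fin k)}
    (hnorm : ∀ x ∈ C, ‖f x‖ = 1) (hsep : ∀ x ∈ C, ∀ y ∈ C, x ≠ y → θ ≤ aDist (f x) (f y)) :
    IsCode θ (C.image f) := by
  exact ⟨Finset.forall_mem_image.2 hnorm, Finset.forall_mem_image.2 fun x hx ↦
    Finset.forall_mem_image.2 fun y hy hxy ↦ hsep x hx y hy (ne_of_apply_ne f hxy)⟩

lemma injOn_of_le_aDist {f : EuclideanSpace ℝ (Fin n) → EuclideanSpace ℝ (Fin k)} (hθ : 0 < θ)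
    (hnorm : ∀ x ∈ C, ‖f x‖ = 1) (hsep : ∀ x ∈ C, ∀ y ∈ C, x ≠ y → θ ≤ aDist (f x) (f y)) :
    Set.InjOn f C := by
  intro x hx y hy hxy
  by_contra hne
  have h := hsep x hx y hy hne
  rw [← hxy, aDist_self (hnorm x hx)] at h
  exact h.not_gt hθ

end Codes

lemma le_aDist_toParallel {m n : ℕ} {θ φ : ℝ}
    {ι : EuclideanSpace ℝ (Fin m) →ₗᵢ[ℝ] EuclideanSpace ℝ (Fin n)}
    {e : EuclideanSpace ℝ (Fin n)} (he : ‖e‖ = 1) (hι : ∀ x, ⟪ι x, e⟫_ℝ = 0)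
    (hθ : θ ∈ Set.Icc 0 π) (hφ : sin φ ≠ 0) (hθφ : cos (2 * φ) ≤ cos θ)
    {x y : EuclideanSpace ℝ (Fin m)} (hx : ‖x‖ = 1) (hy : ‖y‖ = 1)
    (hxy : omega1 θ φ ≤ aDist x y) :
    θ ≤ aDist (toParallel ι e φ x) (toParallel ι e φ y) := by
  have hinner : ⟪x, y⟫_ℝ ≤ cos (omega1 θ φ) :=
    (le_aDist_iff hx hy ⟨arccos_nonneg _, arccos_le_pi _⟩).1 hxy
  rw [le_aDist_iff (norm_toParallel he hι φ hx) (norm_toParallel he hι φ hy) hθ,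
    inner_toParallel he hι]
  calc sin φ ^ 2 * ⟪x, y⟫_ℝ + cos φ ^ 2
      ≤ sin φ ^ 2 * cos (omega1 θ φ) + cos φ ^ 2 := by gcongr
    _ = cos θ := by rw [sin_sq_mul_cos_omega1 hφ hθφ, sub_add_cancel]

lemma omega1_le_aDist_capToHemisphere {n : ℕ} {θ φ : ℝ} {e : EuclideanSpace ℝ (Fin n)}
    (he : ‖e‖ = 1) (hθ : θ ∈ Set.Icc 0 π) (hφ : sin φ ≠ 0) (hφ' : 0 ≤ cos φ)
    {x y : EuclideanSpace ℝ (Fin n)} (hx : ‖x‖ = 1) (hy : ‖y‖ = 1)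
    (hxcap : cos φ ≤ ⟪x, e⟫_ℝ) (hycap : cos φ ≤ ⟪y, e⟫_ℝ) (hxy : θ ≤ aDist x y) :
    omega1 θ φ ≤ aDist (capToHemisphere e φ x) (capToHemisphere e φ y) := by
  rw [omega1_eq_arccos, aDist]
  refine arccos_le_arccos ?_
  rw [le_div_iff₀' (by positivity)]
  calc sin φ ^ 2 * ⟪capToHemisphere e φ x, capToHemisphere e φ y⟫_ℝ
      ≤ ⟪x, y⟫_ℝ - cos φ ^ 2 := sin_sq_mul_inner_capToHemisphere_le he hφ hφ' hxcap hycap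
    _ ≤ cos θ - cos φ ^ 2 := sub_le_sub_right ((le_aDist_iff hx hy hθ).1 hxy) _

theorem sphereMax_le_stripMax (m : ℕ) {θ ψ φ : ℝ} (hθ : 0 < θ) (hθπ : θ ≤ π) (hφ : 0 < φ)
    (hφπ : φ < π) (hθφ : cos (2 * φ) ≤ cos θ) (hψφ : ψ ≤ φ) :
    sphereMax m (omega1 θ φ) ≤ stripMax (m + 1) θ ψ φ := by
  classical
  have he : ‖north (m + 1)‖ = 1 := norm_north m.succ_pos
  have hsin : sin φ ≠ 0 := (sin_pos_of_pos_of_lt_pi hφ hφπ).ne'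
  obtain ⟨ι, hι⟩ := exists_linearIsometry_inner_eq_zero (finrank_euclideanSpace_fin (n := m + 1))
    (norm_ne_zero_iff.1 (he.trans_ne one_ne_zero))
  refine csSup_le' ?_
  rintro _ ⟨C, ⟨hnorm, hdist⟩, rfl⟩
  set f := toParallel ι (north (m + 1)) φ
  have hfnorm : ∀ x ∈ C, ‖f x‖ = 1 := fun x hx ↦ norm_toParallel he hι φ (hnorm x hx)
  have hfsep : ∀ x ∈ C, ∀ y ∈ C, x ≠ y → θ ≤ aDist (f x) (f y) := fun x hx y hy hxy ↦
    le_aDist_toParallel he hι ⟨hθ.le, hθπ⟩ hsin hθφ (hnorm x hx) (hnorm y hy) (hdist x hx y hy hxy)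
  have hpole : ∀ x, aDist (f x) (north (m + 1)) = φ := fun x ↦ by
    rw [aDist, inner_toParallel_pole he hι, arccos_cos hφ.le hφπ.le]
  calc C.card = (C.image f).card :=
        (Finset.card_image_of_injOn (injOn_of_le_aDist hθ hfnorm hfsep)).symm
    _ ≤ stripMax (m + 1) θ ψ φ := (isCode_image hfnorm hfsep).card_le_stripMax hθ <|
        Finset.forall_mem_image.2 fun x _ ↦ ⟨hψφ.trans_eq (hpole x).symm, (hpole x).le⟩

theorem stripMax_le_capMax (n : ℕ) {θ : ℝ} (ψ φ : ℝ) (hθ : 0 < θ) :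
    stripMax n θ ψ φ ≤ capMax n θ φ := by
  refine csSup_le' ?_
  rintro _ ⟨C, hC, hstrip, rfl⟩
  exact hC.card_le_capMax hθ fun x hx ↦ (hstrip x hx).2

theorem capMax_le_sphereMax {n : ℕ} (hn : 0 < n) {θ φ : ℝ} (hθ : 0 < θ) (hθπ : θ ≤ π)
    (hφ : 0 < φ) (hφπ : φ ≤ π / 2) : capMax n θ φ ≤ sphereMax n (omega1 θ φ) := by
  classical
  have he : ‖north n‖ = 1 := norm_north hn
  have hφπ' : φ < π := by linarith [pi_pos]
  have hsin : sin φ ≠ 0 := (sin_pos_of_pos_of_lt_pi hφ hφπ').ne'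
  have hcos : 0 ≤ cos φ := cos_nonneg_of_neg_pi_div_two_le_of_le (by linarith) hφπ
  have hω : 0 < omega1 θ φ := omega1_pos hθ hθπ hsin
  refine csSup_le' ?_
  rintro _ ⟨C, ⟨hnorm, hdist⟩, hcap, rfl⟩
  have hcap' : ∀ x ∈ C, cos φ ≤ ⟪x, north n⟫_ℝ := fun x hx ↦
    (aDist_le_iff (hnorm x hx) he ⟨hφ.le, hφπ'.le⟩).1 (hcap x hx)
  set f := capToHemisphere (north n) φ
  have hfnorm : ∀ x ∈ C, ‖f x‖ = 1 := fun x hx ↦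
    norm_capToHemisphere he hsin hcos (hnorm x hx) (hcap' x hx)
  have hfsep : ∀ x ∈ C, ∀ y ∈ C, x ≠ y → omega1 θ φ ≤ aDist (f x) (f y) := fun x hx y hy hxy ↦
    omega1_le_aDist_capToHemisphere he ⟨hθ.le, hθπ⟩ hsin hcos (hnorm x hx) (hnorm y hy)
      (hcap' x hx) (hcap' y hy) (hdist x hx y hy hxy)
  calc C.card = (C.image f).card :=
        (Finset.card_image_of_injOn (injOn_of_le_aDist hω hfnorm hfsep)).symm
    _ ≤ sphereMax n (omega1 θ φ) := (isCode_image hfnorm hfsep).card_le_sphereMax hω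

end

theorem stmt14 (n : ℕ) (hn : 3 ≤ n) (θ ψ φ : ℝ) (hψ : 0 ≤ ψ) (hψφ : ψ < φ)
    (hφ : φ ≤ Real.pi / 2) (hθ : 0 < θ) (hθ2 : θ < 2 * φ) :
    sphereMax (n - 1) (omega1 θ φ) ≤ stripMax n θ ψ φ ∧
    stripMax n θ ψ φ ≤ capMax n θ φ ∧
    capMax n θ φ ≤ sphereMax n (omega1 θ φ) := by
  obtain ⟨m, rfl⟩ := Nat.exists_eq_add_one_of_ne_zero (by omega : n ≠ 0)
  have hφ0 : 0 < φ := hψ.trans_lt hψφ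
  have hθπ : θ ≤ Real.pi := by linarith
  have hcos : Real.cos (2 * φ) ≤ Real.cos θ :=
    Real.cos_le_cos_of_nonneg_of_le_pi hθ.le (by linarith) hθ2.le
  exact ⟨sphereMax_le_stripMax m hθ hθπ hφ0 (by linarith) hcos hψφ.le,
    stripMax_le_capMax _ ψ φ hθ, capMax_le_sphereMax m.succ_pos hθ hθπ hφ0 hφ⟩
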